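/- Let χ^{μν}, χ^{μνa}, χ^{μνab} : ℝ → ℝ be smooth with χ^{μνab} = χ^{μνba} and χ^{μν…} = χ^{νμ…}, and let Γ^ρ_{μν} : ℝ⁴ → ℝ be smooth. Then for every test covector field θ : ℝ⁴ → ℝ⁴, the weak divergence of the stress-energy quadrupole equals the following multipole expression: Σ_{μ,ν} ∫_ℝ [ χ^{μν}(σ) E_{μν}(σ,0) − Σ_a χ^{μνa}(σ)(∂_a E_{μν})(σ,0) + ½ Σ_{a,b} χ^{μνab}(σ)(∂_a∂_b E_{μν})(σ,0) ] dσ = ∫_ℝ { Σ_ρ θ_ρ(σ,0)[ Σ χ^{μν}Γ^ρ_{μν} + dχ^{0ρ}/dσ − Σ χ^{μνa}∂_aΓ^ρ_{μν} + ½ Σ χ^{μνab}∂_a∂_bΓ^ρ_{μν} ] − Σ_{ρ,a} (∂_aθ_ρ)(σ,0)[ χ^{aρ} + Σ χ^{μνa}Γ^ρ_{μν} + dχ^{0ρa}/dσ − Σ χ^{μνba}∂_bΓ^ρ_{μν} ] + Σ_{ρ,a,b} (∂_a∂_bθ_ρ)(σ,0)[ χ^{bρa} + ½ Σ χ^{μνab}Γ^ρ_{μν}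 + ½ dχ^{0ρab}/dσ ] − ½ Σ_{ν,a,b,c} χ^{cνab} (∂_a∂_b∂_cθ_ν)(σ,0) } dσ, where E_{μν} := Σ_ρ Γ^ρ_{μν}θ_ρ − ∂_μθ_ν and Γ and its derivatives are evaluated at (σ,0,0,0). -/

import Mathlib

/-!
Expanding `E_{μν} = Γ^ρ_{μν} θ_ρ - ∂_μ θ_ν` by the Leibniz rule (`pd_Efield`, `pd_pd_Efield`), the
integrand of the weak divergence splits into connection terms and terms in `∂_μ θ_ν`. The
connection terms agree pointwise with those of the multipole form, the two cross terms of
`∂_a ∂_b (Γ θ)` being merged by the symmetry of `χ^{μνab}` in `a, b` (`connection_terms`). Among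
the others, those with `μ` spatial also agree pointwise (`derivative_terms`), and those with `μ = 0`
contain `∂_0`, which commutes past the spatial derivatives (`pd_comm`) and acts as `d/dσ` on the
worldline.

Hence the multipole integrand is the weak-divergence integrand plus the total derivative
`d/dσ ∑_ρ (χ^{0ρ} θ_ρ - χ^{0ρa} ∂_a θ_ρ + ½ χ^{0ρab} ∂_a ∂_b θ_ρ)`, whose integral vanishes because
`θ` has compact support (`integral_dprod`).
-/

open MeasureTheory

noncomputable section

/-- Standard basis vector `e_μ` of `ℝ⁴`. -/
def e4 (μ : Fin 4) : Fin 4 → ℝ := fun ν => if ν = μ then 1 else 0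

/-- Embedding of Latin (spatial) indices `{1,2,3}` into `{0,1,2,3}`. -/
def sp (a : Fin 3) : Fin 4 := a.succ

/-- The point `(σ,0,0,0)` on the worldline. -/
def pt (σ : ℝ) : Fin 4 → ℝ := fun μ => if μ = 0 then σ else 0

/-- Partial derivative `∂_μ ψ`. -/
def pd (μ : Fin 4) (ψ : (Fin 4 → ℝ) → ℝ) : (Fin 4 → ℝ) → ℝ :=
  fun x => fderiv ℝ ψ x (e4 μ)

/-- `E_{μν} = Σ_ρ Γ^ρ_{μν} θ_ρ − ∂_μ θ_ν`. -/
def Efield (Γ : Fin 4 → Fin 4 → Fin 4 → (Fin 4 → ℝ) → ℝ)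
    (θ : (Fin 4 → ℝ) → Fin 4 → ℝ) (μ ν : Fin 4) : (Fin 4 → ℝ) → ℝ :=
  fun x => (∑ ρ : Fin 4, Γ ρ μ ν x * θ x ρ) - pd μ (fun y => θ y ν) x

/-! ### Calculus of the partial derivatives -/

lemma pd_contDiff {f : (Fin 4 → ℝ) → ℝ} (hf : ContDiff ℝ (⊤ : ℕ∞) f) (μ : Fin 4) :
    ContDiff ℝ (⊤ : ℕ∞) (pd μ f) :=
  (hf.fderiv_right (m := ((⊤ : ℕ∞) : WithTop ℕ∞)) (by simp)).clm_apply contDiff_const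

lemma smooth_differentiable {E : Type*} [NormedAddCommGroup E] [NormedSpace ℝ E] {f : E → ℝ}
    (hf : ContDiff ℝ (⊤ : ℕ∞) f) : Differentiable ℝ f :=
  hf.differentiable (by simp)

lemma pd_hasCompactSupport {f : (Fin 4 → ℝ) → ℝ} (hf : HasCompactSupport f) (μ : Fin 4) :
    HasCompactSupport (pd μ f) :=
  hf.fderiv_apply (𝕜 := ℝ) (e4 μ)

lemma pd_comm {f : (Fin 4 → ℝ) → ℝ} (hf : ContDiff ℝ (⊤ : ℕ∞) f) (μ ν : Fin 4) :
    pd μ (pd ν f) = pd ν (pd μ f) := by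
  have hd : Differentiable ℝ (fderiv ℝ f) :=
    (hf.fderiv_right (m := ((⊤ : ℕ∞) : WithTop ℕ∞)) (by simp)).differentiable (by simp)
  have key : ∀ (i j : Fin 4) (x : Fin 4 → ℝ),
      pd i (pd j f) x = fderiv ℝ (fderiv ℝ f) x (e4 i) (e4 j) := by
    intro i j x
    have h : HasFDerivAt (pd j f) _ x := (hd x).hasFDerivAt.clm_apply (hasFDerivAt_const (e4 j) x)
    unfold pd at h ⊢
    rw [h.fderiv]
    simp
  funext x
  rw [key, key]
  have hs : IsSymmSndFDerivAt ℝ f x :=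
    hf.contDiffAt.isSymmSndFDerivAt (by
      simpa using WithTop.coe_le_coe.2 (le_top (a := (2 : ℕ∞))))
  exact hs.eq (e4 μ) (e4 ν)

lemma pd_mul {f g : (Fin 4 → ℝ) → ℝ} (hf : ContDiff ℝ (⊤ : ℕ∞) f)
    (hg : ContDiff ℝ (⊤ : ℕ∞) g) (μ : Fin 4) :
    pd μ (fun x => f x * g x) = fun x => pd μ f x * g x + f x * pd μ g x := by
  funext x
  unfold pd
  rw [fderiv_fun_mul (smooth_differentiable hf x) (smooth_differentiable hg x)]
  simp
  ring

lemma pd_add {f g : (Fin 4 → ℝ) → ℝ} (hf : ContDiff ℝ (⊤ : ℕ∞) f)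
    (hg : ContDiff ℝ (⊤ : ℕ∞) g) (μ : Fin 4) :
    pd μ (fun x => f x + g x) = fun x => pd μ f x + pd μ g x := by
  funext x
  unfold pd
  rw [fderiv_fun_add (smooth_differentiable hf x) (smooth_differentiable hg x)]
  simp

lemma pd_sub {f g : (Fin 4 → ℝ) → ℝ} (hf : ContDiff ℝ (⊤ : ℕ∞) f)
    (hg : ContDiff ℝ (⊤ : ℕ∞) g) (μ : Fin 4) :
    pd μ (fun x => f x - g x) = fun x => pd μ f x - pd μ g x := by
  funext x
  unfold pd
  rw [fderiv_fun_sub (smooth_differentiable hf x) (smooth_differentiable hg x)]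
  simp

lemma pd_sum {f : Fin 4 → (Fin 4 → ℝ) → ℝ} (hf : ∀ ρ, ContDiff ℝ (⊤ : ℕ∞) (f ρ)) (μ : Fin 4) :
    pd μ (fun x => ∑ ρ, f ρ x) = fun x => ∑ ρ, pd μ (f ρ) x := by
  funext x
  unfold pd
  rw [fderiv_fun_sum (fun ρ _ => smooth_differentiable (hf ρ) x)]
  simp

/-! ### Restriction to the worldline -/

lemma pt_hasDerivAt (σ : ℝ) : HasDerivAt pt (e4 0) σ := by
  rw [hasDerivAt_pi]
  intro i
  by_cases hi : i = 0
  · simpa [pt, e4, hi] using hasDerivAt_id' σ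
  · simpa [pt, e4, hi] using hasDerivAt_const σ (0 : ℝ)

lemma pt_isClosedEmbedding : Topology.IsClosedEmbedding pt := by
  have hc : Continuous pt :=
    continuous_iff_continuousAt.2 fun σ => (pt_hasDerivAt σ).continuousAt
  have hl : Function.LeftInverse (fun x : Fin 4 → ℝ => x 0) pt := fun σ => by simp [pt]
  exact hl.isClosedEmbedding (continuous_apply 0) hc

lemma comp_pt_hasDerivAt {f : (Fin 4 → ℝ) → ℝ} (hf : ContDiff ℝ (⊤ : ℕ∞) f) (σ : ℝ) :
    HasDerivAt (fun s => f (pt s)) (pd 0 f (pt σ)) σ :=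
  (smooth_differentiable hf (pt σ)).hasFDerivAt.comp_hasDerivAt σ (pt_hasDerivAt σ)

lemma comp_pt_hasCompactSupport {f : (Fin 4 → ℝ) → ℝ} (hf : HasCompactSupport f) :
    HasCompactSupport (fun s => f (pt s)) :=
  hf.comp_isClosedEmbedding pt_isClosedEmbedding

lemma integrable_mul_comp_pt {c : ℝ → ℝ} {f : (Fin 4 → ℝ) → ℝ} (hc : Continuous c)
    (hf : ContDiff ℝ (⊤ : ℕ∞) f) (hfc : HasCompactSupport f) :
    Integrable (fun σ => c σ * f (pt σ)) :=
  (hc.mul (hf.continuous.comp pt_isClosedEmbedding.continuous)).integrable_of_hasCompactSupport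
    (comp_pt_hasCompactSupport hfc).mul_left

/-- The `σ`-derivative of `c σ * f (pt σ)`, as produced by the product rule. -/
def dprod (c : ℝ → ℝ) (f : (Fin 4 → ℝ) → ℝ) (σ : ℝ) : ℝ :=
  deriv c σ * f (pt σ) + c σ * pd 0 f (pt σ)

lemma dprod_integrable {c : ℝ → ℝ} {f : (Fin 4 → ℝ) → ℝ} (hc : ContDiff ℝ (⊤ : ℕ∞) c)
    (hf : ContDiff ℝ (⊤ : ℕ∞) f) (hfc : HasCompactSupport f) : Integrable (dprod c f) :=
  (integrable_mul_comp_pt (hc.continuous_deriv (by simp)) hf hfc).add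
    (integrable_mul_comp_pt hc.continuous (pd_contDiff hf 0) (pd_hasCompactSupport hfc 0))

/-- Integration by parts along the worldline: no boundary terms, by compact support. -/
lemma integral_dprod {c : ℝ → ℝ} {f : (Fin 4 → ℝ) → ℝ} (hc : ContDiff ℝ (⊤ : ℕ∞) c)
    (hf : ContDiff ℝ (⊤ : ℕ∞) f) (hfc : HasCompactSupport f) : ∫ σ, dprod c f σ = 0 :=
  integral_eq_zero_of_hasDerivAt_of_integrable
    (f := fun σ => c σ * f (pt σ))
    (fun σ => (smooth_differentiable hc σ).hasDerivAt.mul (comp_pt_hasDerivAt hf σ))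
    (dprod_integrable hc hf hfc) (integrable_mul_comp_pt hc.continuous hf hfc)

/-! ### Derivatives of `E` -/

section EfieldCalculus

variable {Γ : Fin 4 → Fin 4 → Fin 4 → (Fin 4 → ℝ) → ℝ} {θ : (Fin 4 → ℝ) → Fin 4 → ℝ}

lemma Efield_contDiff (hΓ : ∀ ρ μ ν, ContDiff ℝ (⊤ : ℕ∞) (Γ ρ μ ν))
    (hθ : ∀ ρ, ContDiff ℝ (⊤ : ℕ∞) (fun y => θ y ρ)) (μ ν : Fin 4) :
    ContDiff ℝ (⊤ : ℕ∞) (Efield Γ θ μ ν) :=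
  (ContDiff.sum fun ρ _ => (hΓ ρ μ ν).mul (hθ ρ)).sub (pd_contDiff (hθ ν) μ)

lemma Efield_hasCompactSupport (hθ : ∀ ρ, HasCompactSupport (fun y => θ y ρ)) (μ ν : Fin 4) :
    HasCompactSupport (Efield Γ θ μ ν) := by
  have h : ∀ ρ, HasCompactSupport (fun x => Γ ρ μ ν x * θ x ρ) := fun ρ => (hθ ρ).mul_left
  have hs : HasCompactSupport (fun x => ∑ ρ, Γ ρ μ ν x * θ x ρ) := by
    simp only [Fin.sum_univ_four]
    exact (((h 0).add (h 1)).add (h 2)).add (h 3)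
  exact hs.sub (pd_hasCompactSupport (hθ ν) μ)

lemma pd_Efield (hΓ : ∀ ρ μ ν, ContDiff ℝ (⊤ : ℕ∞) (Γ ρ μ ν))
    (hθ : ∀ ρ, ContDiff ℝ (⊤ : ℕ∞) (fun y => θ y ρ)) (μ ν i : Fin 4) :
    pd i (Efield Γ θ μ ν) = fun x =>
      (∑ ρ, (pd i (Γ ρ μ ν) x * θ x ρ + Γ ρ μ ν x * pd i (fun y => θ y ρ) x))
        - pd i (pd μ (fun y => θ y ν)) x := by
  unfold Efield
  rw [pd_sub (ContDiff.sum fun ρ _ => (hΓ ρ μ ν).mul (hθ ρ)) (pd_contDiff (hθ ν) μ),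
    pd_sum fun ρ => (hΓ ρ μ ν).mul (hθ ρ)]
  simp only [pd_mul (hΓ _ μ ν) (hθ _)]

lemma pd_pd_Efield (hΓ : ∀ ρ μ ν, ContDiff ℝ (⊤ : ℕ∞) (Γ ρ μ ν))
    (hθ : ∀ ρ, ContDiff ℝ (⊤ : ℕ∞) (fun y => θ y ρ)) (μ ν i j : Fin 4) :
    pd i (pd j (Efield Γ θ μ ν)) = fun x =>
      (∑ ρ, (pd i (pd j (Γ ρ μ ν)) x * θ x ρ + pd j (Γ ρ μ ν) x * pd i (fun y => θ y ρ) x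
          + (pd i (Γ ρ μ ν) x * pd j (fun y => θ y ρ) x
            + Γ ρ μ ν x * pd i (pd j (fun y => θ y ρ)) x)))
        - pd i (pd j (pd μ (fun y => θ y ν))) x := by
  have h1 : ∀ ρ, ContDiff ℝ (⊤ : ℕ∞) (fun x => pd j (Γ ρ μ ν) x * θ x ρ) := fun ρ =>
    (pd_contDiff (hΓ ρ μ ν) j).mul (hθ ρ)
  have h2 : ∀ ρ, ContDiff ℝ (⊤ : ℕ∞) (fun x => Γ ρ μ ν x * pd j (fun y => θ y ρ) x) := fun ρ =>
    (hΓ ρ μ ν).mul (pd_contDiff (hθ ρ) j)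
  rw [pd_Efield hΓ hθ, pd_sub (ContDiff.sum fun ρ _ => (h1 ρ).add (h2 ρ))
    (pd_contDiff (pd_contDiff (hθ ν) μ) j), pd_sum fun ρ => (h1 ρ).add (h2 ρ)]
  simp only [pd_add (h1 _) (h2 _), pd_mul (pd_contDiff (hΓ _ μ ν) j) (hθ _),
    pd_mul (hΓ _ μ ν) (pd_contDiff (hθ _) j)]

end EfieldCalculus

/-! ### Index algebra -/

lemma separate_terms (c0 : ℝ) (c1 : Fin 3 → ℝ) (c2 : Fin 3 → Fin 3 → ℝ) (F : Fin 4 → ℝ)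
    (F1 : Fin 3 → Fin 4 → ℝ) (F2 : Fin 3 → Fin 3 → Fin 4 → ℝ) (d : ℝ) (d1 : Fin 3 → ℝ)
    (d2 : Fin 3 → Fin 3 → ℝ) :
    c0 * ((∑ ρ, F ρ) - d) - ∑ a, c1 a * ((∑ ρ, F1 a ρ) - d1 a)
      + (1/2) * ∑ a, ∑ b, c2 a b * ((∑ ρ, F2 a b ρ) - d2 a b)
    = (∑ ρ, (c0 * F ρ - (∑ a, c1 a * F1 a ρ) + (1/2) * ∑ a, ∑ b, c2 a b * F2 a b ρ))
      + (-(c0 * d) + (∑ a, c1 a * d1 a) - (1/2) * ∑ a, ∑ b, c2 a b * d2 a b) := by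
  simp only [Fin.sum_univ_three, Fin.sum_univ_four]
  ring

lemma regroup_sums (A : Fin 4 → Fin 4 → Fin 4 → ℝ) (D : Fin 4 → Fin 4 → ℝ) :
    ∑ μ, ∑ ν, ((∑ ρ, A ρ μ ν) + D μ ν) = ∑ ρ, ((∑ μ, ∑ ν, A ρ μ ν) + ∑ μ, D μ ρ) := by
  simp only [Fin.sum_univ_four]
  ring

/-- Leibniz expansion of the connection terms, for one component `ρ`: `G`, `G1`, `G2` stand for
`Γ^ρ` and its first and second spatial derivatives, `t`, `t1`, `t2` for those of `θ_ρ`. Symmetry of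
`c2` in its Latin indices merges the two cross terms. -/
lemma connection_terms (c0 : Fin 4 → Fin 4 → ℝ) (c1 : Fin 4 → Fin 4 → Fin 3 → ℝ)
    (c2 : Fin 4 → Fin 4 → Fin 3 → Fin 3 → ℝ) (hc2 : ∀ μ ν a b, c2 μ ν a b = c2 μ ν b a)
    (G : Fin 4 → Fin 4 → ℝ) (G1 : Fin 3 → Fin 4 → Fin 4 → ℝ)
    (G2 : Fin 3 → Fin 3 → Fin 4 → Fin 4 → ℝ) (t : ℝ) (t1 : Fin 3 → ℝ) (t2 : Fin 3 → Fin 3 → ℝ) :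
    ∑ μ, ∑ ν, (c0 μ ν * (G μ ν * t) - ∑ a, c1 μ ν a * (G1 a μ ν * t + G μ ν * t1 a)
      + (1/2) * ∑ a, ∑ b, c2 μ ν a b * (G2 a b μ ν * t + G1 b μ ν * t1 a
          + (G1 a μ ν * t1 b + G μ ν * t2 a b)))
    = t * ((∑ μ, ∑ ν, c0 μ ν * G μ ν) - (∑ μ, ∑ ν, ∑ a, c1 μ ν a * G1 a μ ν)
        + (1/2) * ∑ μ, ∑ ν, ∑ a, ∑ b, c2 μ ν a b * G2 a b μ ν)
      - (∑ a, t1 a * ((∑ μ, ∑ ν, c1 μ ν a * G μ ν) - ∑ μ, ∑ ν, ∑ b, c2 μ ν b a * G1 b μ ν))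
      + ∑ a, ∑ b, t2 a b * ((1/2) * ∑ μ, ∑ ν, c2 μ ν a b * G μ ν) := by
  simp only [Fin.sum_univ_three, Finset.mul_sum, ← Finset.sum_add_distrib,
    ← Finset.sum_sub_distrib]
  refine Finset.sum_congr rfl fun μ _ => Finset.sum_congr rfl fun ν _ => ?_
  rw [hc2 μ ν 1 0, hc2 μ ν 2 0, hc2 μ ν 2 1]
  ring

/-- The terms coming from `-∂_μ θ_ν`, for one component `ν`, split into `μ = 0` and `μ` spatial:
`d μ`, `d1 a μ`, `d2 a b μ` stand for `∂_μ θ_ν`, `∂_a ∂_μ θ_ν`, `∂_a ∂_b ∂_μ θ_ν`. -/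
lemma derivative_terms (c0 : Fin 4 → ℝ) (c1 : Fin 4 → Fin 3 → ℝ) (c2 : Fin 4 → Fin 3 → Fin 3 → ℝ)
    (d : Fin 4 → ℝ) (d1 : Fin 3 → Fin 4 → ℝ) (d2 : Fin 3 → Fin 3 → Fin 4 → ℝ) :
    ∑ μ, (-(c0 μ * d μ) + (∑ a, c1 μ a * d1 a μ) - (1/2) * ∑ a, ∑ b, c2 μ a b * d2 a b μ)
    = (-(c0 0 * d 0) + (∑ a, c1 0 a * d1 a 0) - (1/2) * ∑ a, ∑ b, c2 0 a b * d2 a b 0)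
      - (∑ a, d (sp a) * c0 (sp a)) + (∑ a, ∑ b, d1 a (sp b) * c1 (sp b) a)
      - (1/2) * ∑ a, ∑ b, ∑ c, c2 (sp c) a b * d2 a b (sp c) := by
  rw [Fin.sum_univ_succ]
  simp only [sp, Fin.sum_univ_three]
  ring

/-- The weak divergence of the stress-energy quadrupole, tested against `θ`, equals
a multipole expression in `θ` and its spatial derivatives along the worldline. -/
theorem quadrupole_weak_divergence_multipole_form
    (χ0 : Fin 4 → Fin 4 → ℝ → ℝ)
    (χ1 : Fin 4 → Fin 4 → Fin 3 → ℝ → ℝ)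
    (χ2 : Fin 4 → Fin 4 → Fin 3 → Fin 3 → ℝ → ℝ)
    (hχ0s : ∀ μ ν, ContDiff ℝ (⊤ : ℕ∞) (χ0 μ ν))
    (hχ1s : ∀ μ ν a, ContDiff ℝ (⊤ : ℕ∞) (χ1 μ ν a))
    (hχ2s : ∀ μ ν a b, ContDiff ℝ (⊤ : ℕ∞) (χ2 μ ν a b))
    (hχ0sym : ∀ μ ν σ, χ0 μ ν σ = χ0 ν μ σ)
    (hχ1sym : ∀ μ ν a σ, χ1 μ ν a σ = χ1 ν μ a σ)
    (hχ2sym : ∀ μ ν a b σ, χ2 μ ν a b σ = χ2 ν μ a b σ)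
    (hχ2symab : ∀ μ ν a b σ, χ2 μ ν a b σ = χ2 μ ν b a σ)
    (Γ : Fin 4 → Fin 4 → Fin 4 → (Fin 4 → ℝ) → ℝ)
    (hΓs : ∀ ρ μ ν, ContDiff ℝ (⊤ : ℕ∞) (Γ ρ μ ν))
    (θ : (Fin 4 → ℝ) → Fin 4 → ℝ)
    (hθs : ContDiff ℝ (⊤ : ℕ∞) θ) (hθc : HasCompactSupport θ) :
    ∑ μ : Fin 4, ∑ ν : Fin 4, ∫ σ : ℝ,
      (χ0 μ ν σ * Efield Γ θ μ ν (pt σ)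
        - ∑ a : Fin 3, χ1 μ ν a σ * pd (sp a) (Efield Γ θ μ ν) (pt σ)
        + (1/2) * ∑ a : Fin 3, ∑ b : Fin 3,
            χ2 μ ν a b σ * pd (sp a) (pd (sp b) (Efield Γ θ μ ν)) (pt σ))
    =
    ∫ σ : ℝ,
      ((∑ ρ : Fin 4, θ (pt σ) ρ *
          ((∑ μ : Fin 4, ∑ ν : Fin 4, χ0 μ ν σ * Γ ρ μ ν (pt σ))
            + deriv (χ0 0 ρ) σ
            - (∑ μ : Fin 4, ∑ ν : Fin 4, ∑ a : Fin 3,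
                χ1 μ ν a σ * pd (sp a) (Γ ρ μ ν) (pt σ))
            + (1/2) * ∑ μ : Fin 4, ∑ ν : Fin 4, ∑ a : Fin 3, ∑ b : Fin 3,
                χ2 μ ν a b σ * pd (sp a) (pd (sp b) (Γ ρ μ ν)) (pt σ)))
        - (∑ ρ : Fin 4, ∑ a : Fin 3, pd (sp a) (fun y => θ y ρ) (pt σ) *
            (χ0 (sp a) ρ σ
              + (∑ μ : Fin 4, ∑ ν : Fin 4, χ1 μ ν a σ * Γ ρ μ ν (pt σ))
              + deriv (fun s => χ1 0 ρ a s) σ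
              - (∑ μ : Fin 4, ∑ ν : Fin 4, ∑ b : Fin 3,
                  χ2 μ ν b a σ * pd (sp b) (Γ ρ μ ν) (pt σ))))
        + (∑ ρ : Fin 4, ∑ a : Fin 3, ∑ b : Fin 3,
            pd (sp a) (pd (sp b) (fun y => θ y ρ)) (pt σ) *
            (χ1 (sp b) ρ a σ
              + (1/2) * (∑ μ : Fin 4, ∑ ν : Fin 4, χ2 μ ν a b σ * Γ ρ μ ν (pt σ))
              + (1/2) * deriv (fun s => χ2 0 ρ a b s) σ))
        - (1/2) * ∑ ν : Fin 4, ∑ a : Fin 3, ∑ b : Fin 3, ∑ c : Fin 3,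
            χ2 (sp c) ν a b σ *
              pd (sp a) (pd (sp b) (pd (sp c) (fun y => θ y ν))) (pt σ)) := by
  have hθ : ∀ ρ, ContDiff ℝ (⊤ : ℕ∞) (fun y => θ y ρ) := fun ρ => contDiff_pi.1 hθs ρ
  have hc : ∀ ρ, HasCompactSupport (fun y => θ y ρ) := fun ρ =>
    hθc.comp_left (g := fun v : Fin 4 → ℝ => v ρ) rfl
  have hE := fun μ ν => Efield_contDiff hΓs hθ μ ν
  have hEc := fun μ ν => Efield_hasCompactSupport (Γ := Γ) hc μ ν
  have hθ1 := fun ρ a => pd_contDiff (hθ ρ) (sp a)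
  have hc1 := fun ρ a => pd_hasCompactSupport (hc ρ) (sp a)
  have hθ2 := fun ρ a b => pd_contDiff (hθ1 ρ b) (sp a)
  have hc2 := fun ρ a b => pd_hasCompactSupport (hc1 ρ b) (sp a)
  have hL : ∀ μ ν, Integrable (fun σ : ℝ => χ0 μ ν σ * Efield Γ θ μ ν (pt σ)
        - ∑ a : Fin 3, χ1 μ ν a σ * pd (sp a) (Efield Γ θ μ ν) (pt σ)
        + (1/2) * ∑ a : Fin 3, ∑ b : Fin 3,
            χ2 μ ν a b σ * pd (sp a) (pd (sp b) (Efield Γ θ μ ν)) (pt σ)) := by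
    intro μ ν
    refine ((integrable_mul_comp_pt (hχ0s μ ν).continuous (hE μ ν) (hEc μ ν)).sub
      (integrable_finsetSum _ fun a _ => ?_)).add
      (Integrable.const_mul (integrable_finsetSum _ fun a _ => integrable_finsetSum _ fun b _ => ?_) _)
    · exact integrable_mul_comp_pt (hχ1s μ ν a).continuous (pd_contDiff (hE μ ν) _)
        (pd_hasCompactSupport (hEc μ ν) _)
    · exact integrable_mul_comp_pt (hχ2s μ ν a b).continuous
        (pd_contDiff (pd_contDiff (hE μ ν) _) _)
        (pd_hasCompactSupport (pd_hasCompactSupport (hEc μ ν) _) _)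
  -- The total `σ`-derivative by which the two integrands differ.
  let B : Fin 4 → ℝ → ℝ := fun ρ σ => dprod (χ0 0 ρ) (fun y => θ y ρ) σ
    - (∑ a : Fin 3, dprod (χ1 0 ρ a) (pd (sp a) (fun y => θ y ρ)) σ)
    + (1/2) * ∑ a : Fin 3, ∑ b : Fin 3,
        dprod (χ2 0 ρ a b) (pd (sp a) (pd (sp b) (fun y => θ y ρ))) σ
  have hI0 := fun ρ => dprod_integrable (hχ0s 0 ρ) (hθ ρ) (hc ρ)
  have hI1 := fun ρ a => dprod_integrable (hχ1s 0 ρ a) (hθ1 ρ a) (hc1 ρ a)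
  have hI2 := fun ρ a b => dprod_integrable (hχ2s 0 ρ a b) (hθ2 ρ a b) (hc2 ρ a b)
  have hJ1 := fun ρ => integrable_finsetSum Finset.univ fun a _ => hI1 ρ a
  have hJ2' := fun ρ a => integrable_finsetSum Finset.univ fun b _ => hI2 ρ a b
  have hJ2 := fun ρ => integrable_finsetSum Finset.univ fun a _ => hJ2' ρ a
  have hB : ∀ ρ, Integrable (B ρ) := fun ρ => ((hI0 ρ).sub (hJ1 ρ)).add ((hJ2 ρ).const_mul _)
  have hB0 : ∀ ρ, ∫ σ, B ρ σ = 0 := by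
    intro ρ
    have e1 : ∫ σ, (∑ a : Fin 3, dprod (χ1 0 ρ a) (pd (sp a) (fun y => θ y ρ)) σ) = 0 := by
      rw [integral_finsetSum _ fun a _ => hI1 ρ a]
      exact Finset.sum_eq_zero fun a _ => integral_dprod (hχ1s 0 ρ a) (hθ1 ρ a) (hc1 ρ a)
    have e2 : ∫ σ, (∑ a : Fin 3, ∑ b : Fin 3,
        dprod (χ2 0 ρ a b) (pd (sp a) (pd (sp b) (fun y => θ y ρ))) σ) = 0 := by
      rw [integral_finsetSum _ fun a _ => hJ2' ρ a]
      refine Finset.sum_eq_zero fun a _ => ?_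
      rw [integral_finsetSum _ fun b _ => hI2 ρ a b]
      exact Finset.sum_eq_zero fun b _ =>
        integral_dprod (hχ2s 0 ρ a b) (hθ2 ρ a b) (hc2 ρ a b)
    calc ∫ σ, B ρ σ = _ := integral_add ((hI0 ρ).sub (hJ1 ρ)) ((hJ2 ρ).const_mul _)
      _ = 0 := by
        rw [integral_const_mul, e2, integral_sub (hI0 ρ) (hJ1 ρ), e1,
          integral_dprod (hχ0s 0 ρ) (hθ ρ) (hc ρ)]
        simp
  have hLs := fun μ => integrable_finsetSum Finset.univ fun ν _ => hL μ ν
  have hLt := integrable_finsetSum Finset.univ fun μ _ => hLs μ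
  have hBs := integrable_finsetSum Finset.univ fun ρ _ => hB ρ
  have hBs0 : ∫ σ, ∑ ρ, B ρ σ = 0 := by
    rw [integral_finsetSum _ fun ρ _ => hB ρ]
    exact Finset.sum_eq_zero fun ρ _ => hB0 ρ
  rw [Finset.sum_congr rfl fun μ _ => (integral_finsetSum Finset.univ fun ν _ => hL μ ν).symm,
    ← integral_finsetSum Finset.univ fun μ _ => hLs μ]
  refine (add_zero _).symm.trans ?_
  rw [← hBs0, ← integral_add hLt hBs]
  refine integral_congr_ae (Filter.Eventually.of_forall fun σ => ?_)
  -- `∂_0` commutes past the spatial derivatives of `θ`.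
  have k1 : ∀ ρ a, pd 0 (pd (sp a) (fun y => θ y ρ)) = pd (sp a) (pd 0 (fun y => θ y ρ)) :=
    fun ρ a => pd_comm (hθ ρ) _ _
  have k2 : ∀ ρ a b, pd 0 (pd (sp a) (pd (sp b) (fun y => θ y ρ)))
      = pd (sp a) (pd (sp b) (pd 0 (fun y => θ y ρ))) := fun ρ a b => by
    rw [pd_comm (hθ1 ρ b), k1]
  have split : ∀ μ ν, χ0 μ ν σ * Efield Γ θ μ ν (pt σ)
        - ∑ a : Fin 3, χ1 μ ν a σ * pd (sp a) (Efield Γ θ μ ν) (pt σ)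
        + (1/2) * ∑ a : Fin 3, ∑ b : Fin 3,
            χ2 μ ν a b σ * pd (sp a) (pd (sp b) (Efield Γ θ μ ν)) (pt σ)
      = (∑ ρ, (χ0 μ ν σ * (Γ ρ μ ν (pt σ) * θ (pt σ) ρ)
          - ∑ a : Fin 3, χ1 μ ν a σ * (pd (sp a) (Γ ρ μ ν) (pt σ) * θ (pt σ) ρ
              + Γ ρ μ ν (pt σ) * pd (sp a) (fun y => θ y ρ) (pt σ))
          + (1/2) * ∑ a : Fin 3, ∑ b : Fin 3, χ2 μ ν a b σ *
              (pd (sp a) (pd (sp b) (Γ ρ μ ν)) (pt σ) * θ (pt σ) ρ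
                + pd (sp b) (Γ ρ μ ν) (pt σ) * pd (sp a) (fun y => θ y ρ) (pt σ)
                + (pd (sp a) (Γ ρ μ ν) (pt σ) * pd (sp b) (fun y => θ y ρ) (pt σ)
                  + Γ ρ μ ν (pt σ) * pd (sp a) (pd (sp b) (fun y => θ y ρ)) (pt σ)))))
        + (-(χ0 μ ν σ * pd μ (fun y => θ y ν) (pt σ))
          + (∑ a : Fin 3, χ1 μ ν a σ * pd (sp a) (pd μ (fun y => θ y ν)) (pt σ))
          - (1/2) * ∑ a : Fin 3, ∑ b : Fin 3,
              χ2 μ ν a b σ * pd (sp a) (pd (sp b) (pd μ (fun y => θ y ν))) (pt σ)) := by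
    intro μ ν
    simp only [pd_pd_Efield hΓs hθ]
    simp only [pd_Efield hΓs hθ, Efield]
    exact separate_terms ..
  have hsum : ∑ μ, ∑ ν, (χ0 μ ν σ * Efield Γ θ μ ν (pt σ)
        - ∑ a : Fin 3, χ1 μ ν a σ * pd (sp a) (Efield Γ θ μ ν) (pt σ)
        + (1/2) * ∑ a : Fin 3, ∑ b : Fin 3,
            χ2 μ ν a b σ * pd (sp a) (pd (sp b) (Efield Γ θ μ ν)) (pt σ))
      = ∑ ρ, ((θ (pt σ) ρ * ((∑ μ, ∑ ν, χ0 μ ν σ * Γ ρ μ ν (pt σ))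
            - (∑ μ, ∑ ν, ∑ a, χ1 μ ν a σ * pd (sp a) (Γ ρ μ ν) (pt σ))
            + (1/2) * ∑ μ, ∑ ν, ∑ a, ∑ b,
                χ2 μ ν a b σ * pd (sp a) (pd (sp b) (Γ ρ μ ν)) (pt σ))
          - (∑ a, pd (sp a) (fun y => θ y ρ) (pt σ) *
              ((∑ μ, ∑ ν, χ1 μ ν a σ * Γ ρ μ ν (pt σ))
                - ∑ μ, ∑ ν, ∑ b, χ2 μ ν b a σ * pd (sp b) (Γ ρ μ ν) (pt σ)))
          + ∑ a, ∑ b, pd (sp a) (pd (sp b) (fun y => θ y ρ)) (pt σ) *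
              ((1/2) * ∑ μ, ∑ ν, χ2 μ ν a b σ * Γ ρ μ ν (pt σ)))
        + ((-(χ0 0 ρ σ * pd 0 (fun y => θ y ρ) (pt σ))
            + (∑ a, χ1 0 ρ a σ * pd (sp a) (pd 0 (fun y => θ y ρ)) (pt σ))
            - (1/2) * ∑ a, ∑ b,
                χ2 0 ρ a b σ * pd (sp a) (pd (sp b) (pd 0 (fun y => θ y ρ))) (pt σ))
          - (∑ a, pd (sp a) (fun y => θ y ρ) (pt σ) * χ0 (sp a) ρ σ)
          + (∑ a, ∑ b, pd (sp a) (pd (sp b) (fun y => θ y ρ)) (pt σ) * χ1 (sp b) ρ a σ)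
          - (1/2) * ∑ a, ∑ b, ∑ c, χ2 (sp c) ρ a b σ *
              pd (sp a) (pd (sp b) (pd (sp c) (fun y => θ y ρ))) (pt σ))) := by
    rw [Finset.sum_congr rfl fun μ _ => Finset.sum_congr rfl fun ν _ => split μ ν]
    refine (regroup_sums _ _).trans (Finset.sum_congr rfl fun ρ _ => congrArg₂ (· + ·) ?_ ?_)
    · exact connection_terms (fun μ ν => χ0 μ ν σ) (fun μ ν a => χ1 μ ν a σ)
        (fun μ ν a b => χ2 μ ν a b σ) (fun μ ν a b => hχ2symab μ ν a b σ)
        (fun μ ν => Γ ρ μ ν (pt σ)) (fun a μ ν => pd (sp a) (Γ ρ μ ν) (pt σ))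
        (fun a b μ ν => pd (sp a) (pd (sp b) (Γ ρ μ ν)) (pt σ)) (θ (pt σ) ρ)
        (fun a => pd (sp a) (fun y => θ y ρ) (pt σ))
        (fun a b => pd (sp a) (pd (sp b) (fun y => θ y ρ)) (pt σ))
    · exact derivative_terms (fun μ => χ0 μ ρ σ) (fun μ a => χ1 μ ρ a σ)
        (fun μ a b => χ2 μ ρ a b σ) (fun μ => pd μ (fun y => θ y ρ) (pt σ))
        (fun a μ => pd (sp a) (pd μ (fun y => θ y ρ)) (pt σ))
        (fun a b μ => pd (sp a) (pd (sp b) (pd μ (fun y => θ y ρ))) (pt σ))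
  simp only [hsum, B, dprod, k1, k2]
  rw [Finset.mul_sum, ← Finset.sum_add_distrib, ← Finset.sum_sub_distrib,
    ← Finset.sum_add_distrib, ← Finset.sum_sub_distrib]
  refine Finset.sum_congr rfl fun ρ _ => ?_
  simp only [Fin.sum_univ_three]
  ring

end
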